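/- arXiv:2008.12722 — 4 statements merged into one kernel-verified Lean document; each statement's English description precedes it below -/
import Mathlib

section
/- Let p : ℝ → ℝ be continuous, even, and strictly monotone on [0,∞), and define φ(a,b) = p(a)a + p(b)b − p(a+b)(a+b). Then for all real a, b one has φ(a,b) = 0 if and only if a = 0 or b = 0 or a + b = 0. -/
/-!
The function `f x = p x * x` is odd, and for positive `x`, `y` monotonicity of the weight `p`
compares `p x * x + p y * y` strictly with `p (x + y) * x + p (x + y) * y = f (x + y)`; so `f` is
additive at no pair of positive elements. By oddness, additivity of `f` at `(a, b)` means that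
`f` sums to zero over `a`, `b`, `-(a + b)`. If none of these three vanishes, two of them have the
same sign, and up to a change of all signs `f` would be additive at a pair of positive elements.
-/

section OddFunction

variable {G H : Type*} [AddCommGroup G] [LinearOrder G] [IsOrderedAddMonoid G] [AddCommGroup H]
  {f : G → H}

theorem map_add_map_ne_of_odd (hf : Function.Odd f)
    (hpos : ∀ ⦃x y⦄, 0 < x → 0 < y → f x + f y ≠ f (x + y))
    {a b : G} (ha : a ≠ 0) (hb : b ≠ 0) (hab : a + b ≠ 0) : f a + f b ≠ f (a + b) := by
  wlog hsum : 0 < a + b generalizing a b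
  · have hsum_neg : 0 < -a + -b := by
      rw [← neg_add]
      exact neg_pos.2 (lt_of_le_of_ne (not_lt.1 hsum) hab)
    have hne := this (neg_ne_zero.2 ha) (neg_ne_zero.2 hb) hsum_neg.ne' hsum_neg
    rwa [← neg_add, hf, hf, hf, ← neg_add, ne_eq, neg_inj] at hne
  wlog hle : a ≤ b generalizing a b
  · rw [add_comm a b] at hab hsum ⊢
    rw [add_comm (f a)]
    exact this hb ha hab hsum (le_of_not_ge hle)
  rcases ha.lt_or_gt with ha_neg | ha_pos
  · intro heq
    refine hpos (neg_pos.2 ha_neg) hsum ?_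
    rw [neg_add_cancel_left, hf, ← heq, neg_add_cancel_left]
  · exact hpos ha_pos (ha_pos.trans_le hle)

theorem map_add_map_eq_iff_of_odd [IsAddTorsionFree H] (hf : Function.Odd f)
    (hpos : ∀ ⦃x y⦄, 0 < x → 0 < y → f x + f y ≠ f (x + y)) {a b : G} :
    f a + f b = f (a + b) ↔ a = 0 ∨ b = 0 ∨ a + b = 0 := by
  constructor
  · contrapose!
    rintro ⟨ha, hb, hab⟩
    exact map_add_map_ne_of_odd hf hpos ha hb hab
  · rintro (rfl | rfl | hab)
    · rw [hf.map_zero, zero_add, zero_add]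
    · rw [hf.map_zero, add_zero, add_zero]
    · rw [hab, hf.map_zero, eq_neg_of_add_eq_zero_right hab, hf, add_neg_cancel]

end OddFunction

section MonotoneWeight

variable {R : Type*} [Semiring R] [PartialOrder R] [IsStrictOrderedRing R] {p : R → R} {x y : R}

theorem mul_add_mul_lt_of_strictMonoOn (hp : StrictMonoOn p (Set.Ioi 0)) (hx : 0 < x)
    (hy : 0 < y) : p x * x + p y * y < p (x + y) * (x + y) := by
  have hxy : 0 < x + y := add_pos hx hy
  have hpx : p x < p (x + y) := hp hx hxy (lt_add_of_pos_right x hy)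
  have hpy : p y < p (x + y) := hp hy hxy (lt_add_of_pos_left y hx)
  calc p x * x + p y * y
    _ < p (x + y) * x + p (x + y) * y := by gcongr
    _ = p (x + y) * (x + y) := (mul_add _ _ _).symm

theorem lt_mul_add_mul_of_strictAntiOn (hp : StrictAntiOn p (Set.Ioi 0)) (hx : 0 < x)
    (hy : 0 < y) : p (x + y) * (x + y) < p x * x + p y * y := by
  have hxy : 0 < x + y := add_pos hx hy
  have hpx : p (x + y) < p x := hp hx hxy (lt_add_of_pos_right x hy)
  have hpy : p (x + y) < p y := hp hy hxy (lt_add_of_pos_left y hx)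
  calc p (x + y) * (x + y)
    _ = p (x + y) * x + p (x + y) * y := mul_add _ _ _
    _ < p x * x + p y * y := by gcongr

end MonotoneWeight

theorem phi_zeros_general {R : Type*} [Ring R] [LinearOrder R] [IsStrictOrderedRing R] {p : R → R}
    (hp_even : Function.Even p)
    (hp_mono : StrictMonoOn p (Set.Ioi 0) ∨ StrictAntiOn p (Set.Ioi 0)) (a b : R) :
    p a * a + p b * b - p (a + b) * (a + b) = 0 ↔ a = 0 ∨ b = 0 ∨ a + b = 0 := by
  have hodd : Function.Odd (fun x ↦ p x * x) := hp_even.mul_odd fun _ ↦ rfl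
  have hpos : ∀ ⦃x y⦄, 0 < x → 0 < y → p x * x + p y * y ≠ p (x + y) * (x + y) := by
    intro x y hx hy
    rcases hp_mono with hp | hp
    · exact (mul_add_mul_lt_of_strictMonoOn hp hx hy).ne
    · exact (lt_mul_add_mul_of_strictAntiOn hp hx hy).ne'
  rw [sub_eq_zero]
  exact map_add_map_eq_iff_of_odd hodd hpos

/-- For `p` continuous, even and strictly monotone on `[0,∞)`, the zeros of
`φ(a,b) = p(a)a + p(b)b − p(a+b)(a+b)` are exactly `a = 0`, `b = 0` and `a + b = 0`. -/
theorem phi_zeros (p : ℝ → ℝ)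
    (hp_cont : Continuous p)
    (hp_even : ∀ x, p (-x) = p x)
    (hp_mono : StrictMonoOn p (Set.Ici (0 : ℝ)) ∨ StrictAntiOn p (Set.Ici (0 : ℝ))) :
    ∀ a b : ℝ,
      p a * a + p b * b - p (a + b) * (a + b) = 0 ↔ a = 0 ∨ b = 0 ∨ a + b = 0 :=
  phi_zeros_general hp_even
    (hp_mono.imp (·.mono Set.Ioi_subset_Ici_self) (·.mono Set.Ioi_subset_Ici_self))
end

section
/- Let p : ℝ → ℝ be continuously differentiable, even, and strictly monotone on [0,∞), and define φ(a,b) = p(a)a + p(b)b − p(a+b)(a+b). Then there exists a continuous function φ̃ : ℝ² \ {(0,0)} → ℝ which vanishes nowhere on ℝ² \ {(0,0)} such that φ(a,b) = a b (a+b) φ̃(a,b) for all (a,b) ≠ (0,0). -/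
/-! Replacing `p` by `-p` if necessary, let `p` be increasing on `[0,∞)`. With `c = -(a + b)`,
evenness turns `φ(a,b)` into the symmetric sum `p(a)a + p(b)b + p(c)c`. If none of `a`, `b`, `c` is
zero, two of them have the same sign and the third one has the largest absolute value, so `φ(a,b)`
and `a b (a + b)` have opposite signs.

Moreover `φ(a,b) / a = p(a) - f[b, a + b]`, where `f(t) = t p(t)` and `f[·,·]` is the divided
difference extended by `f'` to the diagonal. This quotient is continuous away from the origin, since
`f` is `C¹` away from `0`. By symmetry the same holds for `φ / b` and `φ / c`, and the identity
`a² b² + b² c² + c² a² = (a² + a b + b²)²` lets the three quotients be glued into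
`φ̃ = -(b c (φ / a) + c a (φ / b) + a b (φ / c)) / (a² + a b + b²)²`.
The three summands never have opposite signs, and away from the origin they do not all vanish. -/

open Set Topology

section DividedDifference

variable {𝕜 E : Type*} [NontriviallyNormedField 𝕜] [NormedAddCommGroup E] [NormedSpace 𝕜 E]
  {f : 𝕜 → E} {x y : 𝕜}

theorem continuousAt_uncurry_dslope_of_ne (hxy : x ≠ y) (hx : ContinuousAt f x)
    (hy : ContinuousAt f y) : ContinuousAt (fun z : 𝕜 × 𝕜 ↦ dslope f z.1 z.2) (x, y) := by
  have h_slope : ContinuousAt (fun z : 𝕜 × 𝕜 ↦ (z.2 - z.1)⁻¹ • (f z.2 - f z.1)) (x, y) :=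
    ((continuousAt_snd.sub continuousAt_fst).inv₀ (sub_ne_zero.2 hxy.symm)).smul
      ((hy.comp' continuousAt_snd).sub (hx.comp' continuousAt_fst))
  refine h_slope.congr ?_
  filter_upwards [(isOpen_ne_fun continuous_fst continuous_snd).mem_nhds hxy] with z hz
  rw [dslope_of_ne f (Ne.symm hz), slope_def_module]

theorem continuousAt_uncurry_dslope_diag (hf : HasStrictDerivAt f (deriv f x) x)
    (hf' : ContinuousAt (deriv f) x) :
    ContinuousAt (fun z : 𝕜 × 𝕜 ↦ dslope f z.1 z.2) (x, x) := by
  refine Metric.continuousAt_iff'.2 fun ε hε ↦ ?_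
  have h_deriv : ∀ᶠ z : 𝕜 × 𝕜 in 𝓝 (x, x), dist (deriv f z.1) (deriv f x) < ε :=
    Metric.continuousAt_iff'.1 (hf'.comp' (continuousAt_fst (p := (x, x)))) ε hε
  have h_slope := hf.isLittleO.def (half_pos hε)
  filter_upwards [h_deriv, h_slope] with z hz_deriv hz_slope
  rw [dslope_same]
  by_cases hz : z.1 = z.2
  · rwa [← hz, dslope_same]
  · have h_norm : 0 < ‖z.1 - z.2‖ := norm_sub_pos_iff.2 hz
    have h_factor : f z.1 - f z.2 - (z.1 - z.2) • deriv f x =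
        (z.1 - z.2) • (dslope f z.1 z.2 - deriv f x) := by
      rw [smul_sub, ← neg_sub (f z.2), ← sub_smul_dslope f z.1 z.2, ← neg_smul, neg_sub]
    have h_le : ‖dslope f z.1 z.2 - deriv f x‖ ≤ ε / 2 := by
      simp only [ContinuousLinearMap.toSpanSingleton_apply, h_factor, norm_smul] at hz_slope
      rw [mul_comm] at hz_slope
      exact le_of_mul_le_mul_right hz_slope h_norm
    rw [dist_eq_norm]
    exact h_le.trans_lt (half_lt_self hε)

end DividedDifference

section EvenMonotone

theorem lt_of_abs_lt_of_even {α β : Type*} [AddCommGroup α] [LinearOrder α]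
    [IsOrderedAddMonoid α] [Preorder β] {p : α → β} (hp_even : p.Even)
    (hp_mono : StrictMonoOn p (Ici 0)) {x y : α} (hxy : |x| < |y|) : p x < p y := by
  have h_abs (t : α) : p |t| = p t := by
    rcases abs_choice t with h | h <;> simp only [h, hp_even.eq]
  rw [← h_abs x, ← h_abs y]
  exact hp_mono (abs_nonneg x) (abs_nonneg y) hxy

theorem mul_deriv_nonneg_of_even {p : ℝ → ℝ} (hp_even : p.Even) (hp_mono : MonotoneOn p (Ici 0))
    (x : ℝ) : 0 ≤ x * deriv p x := by
  have h_nonneg {t : ℝ} (ht : 0 < t) : 0 ≤ deriv p t := by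
    rw [← derivWithin_of_mem_nhds (Ici_mem_nhds ht)]
    exact hp_mono.derivWithin_nonneg
  have h_neg : deriv p (-x) = -deriv p x := by
    have h := deriv_comp_neg p x
    rw [funext hp_even] at h
    rw [h, neg_neg]
  rcases lt_trichotomy x 0 with hx | rfl | hx
  · have h := h_nonneg (neg_pos.2 hx)
    rw [h_neg, neg_nonneg] at h
    exact mul_nonneg_of_nonpos_of_nonpos hx.le h
  · rw [zero_mul]
  · exact mul_nonneg hx.le (h_nonneg hx)

end EvenMonotone

/-- The function `φ(a,b) = p(a)a + p(b)b - p(a+b)(a+b)`. -/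
def phi (p : ℝ → ℝ) (a b : ℝ) : ℝ :=
  p a * a + p b * b - p (a + b) * (a + b)

/-- The quotient `φ(a,b) / a`, extended to `a = 0` by `p(0) - f'(b)` with `f(t) = t p(t)`, its
limit if `p` is continuous at `0` and differentiable at `b`. -/
noncomputable def phiQuotient (p : ℝ → ℝ) (a b : ℝ) : ℝ :=
  p a - dslope (fun t ↦ t * p t) b (a + b)

/-- The function `φ̃` with `φ(a,b) = a b (a+b) φ̃(a,b)`, glued from the quotients of `φ(a,b)` by
`a`, `b` and `-(a+b)`. At the origin it takes the junk value `0`. -/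
noncomputable def phiTilde (p : ℝ → ℝ) (a b : ℝ) : ℝ :=
  (b * (a + b) * phiQuotient p a b + a * (b + a) * phiQuotient p b a
    - a * b * phiQuotient p (-(a + b)) a) / (a ^ 2 + a * b + b ^ 2) ^ 2

variable {p : ℝ → ℝ} {a b : ℝ}

theorem phi_comm (p : ℝ → ℝ) (a b : ℝ) : phi p b a = phi p a b := by
  unfold phi
  rw [add_comm b a]
  ring

theorem phi_neg_add (hp_even : p.Even) (a b : ℝ) : phi p (-(a + b)) a = phi p a b := by
  unfold phi
  rw [show -(a + b) + a = -b by ring, hp_even, hp_even]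
  ring

theorem mul_phiQuotient (p : ℝ → ℝ) (a b : ℝ) : a * phiQuotient p a b = phi p a b := by
  have h_dslope := sub_smul_dslope (fun t ↦ t * p t) b (a + b)
  simp only [add_sub_cancel_right, smul_eq_mul] at h_dslope
  unfold phiQuotient phi
  linear_combination -h_dslope

theorem sq_add_mul_add_sq_pos (hab : (a, b) ≠ (0, 0)) : 0 < a ^ 2 + a * b + b ^ 2 := by
  have h_sq : 0 < a ^ 2 + b ^ 2 := by
    by_cases ha : a = 0
    · have hb : b ≠ 0 := fun hb ↦ hab (by rw [ha, hb])
      positivity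
    · positivity
  linarith [sq_nonneg (a + b)]

theorem phi_eq_mul_phiTilde (hp_even : p.Even) (hab : (a, b) ≠ (0, 0)) :
    phi p a b = a * b * (a + b) * phiTilde p a b := by
  have h_a := mul_phiQuotient p a b
  have h_b := mul_phiQuotient p b a
  have h_c := mul_phiQuotient p (-(a + b)) a
  rw [phi_comm] at h_b
  rw [phi_neg_add hp_even] at h_c
  unfold phiTilde
  rw [mul_div_assoc', eq_div_iff (pow_ne_zero 2 (sq_add_mul_add_sq_pos hab).ne')]
  linear_combination -(b * (a + b)) ^ 2 * h_a - (a * (a + b)) ^ 2 * h_b - (a * b) ^ 2 * h_c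

theorem continuousAt_uncurry_phiQuotient (hp_cont : Continuous p)
    (hp_smooth : ContDiffOn ℝ 1 p {0}ᶜ) (hab : (a, b) ≠ (0, 0)) :
    ContinuousAt (fun x : ℝ × ℝ ↦ phiQuotient p x.1 x.2) (a, b) := by
  have h_dslope :
      ContinuousAt (fun z : ℝ × ℝ ↦ dslope (fun t ↦ t * p t) z.1 z.2) (b, a + b) := by
    by_cases ha : a = 0
    · have hb : b ≠ 0 := fun hb ↦ hab (by rw [ha, hb])
      have h_smooth : ContDiffAt ℝ 1 (fun t ↦ t * p t) b :=
        contDiffAt_id.mul (hp_smooth.contDiffAt (isOpen_compl_singleton.mem_nhds hb))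
      have h_deriv : ContinuousAt (deriv fun t ↦ t * p t) b :=
        (h_smooth.continuousAt_fderiv one_ne_zero).clm_apply continuousAt_const
      rw [ha, zero_add]
      exact continuousAt_uncurry_dslope_diag (h_smooth.hasStrictDerivAt one_ne_zero) h_deriv
    · have h_cont : Continuous fun t ↦ t * p t := continuous_id.mul hp_cont
      exact continuousAt_uncurry_dslope_of_ne (right_ne_add.2 ha) h_cont.continuousAt
        h_cont.continuousAt
  exact (hp_cont.comp continuous_fst).continuousAt.sub <| h_dslope.comp_of_eq
    (f := fun x : ℝ × ℝ ↦ (x.2, x.1 + x.2)) (by fun_prop) rfl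

theorem continuousAt_uncurry_phiTilde (hp_cont : Continuous p)
    (hp_smooth : ContDiffOn ℝ 1 p {0}ᶜ) (hab : (a, b) ≠ (0, 0)) :
    ContinuousAt (fun x : ℝ × ℝ ↦ phiTilde p x.1 x.2) (a, b) := by
  have h_a := continuousAt_uncurry_phiQuotient hp_cont hp_smooth hab
  have h_b : ContinuousAt (fun x : ℝ × ℝ ↦ phiQuotient p x.2 x.1) (a, b) := by
    have hba : (b, a) ≠ (0, 0) := by simpa [and_comm] using hab
    exact (continuousAt_uncurry_phiQuotient hp_cont hp_smooth hba).comp_of_eq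
      (f := Prod.swap) continuous_swap.continuousAt rfl
  have h_c : ContinuousAt (fun x : ℝ × ℝ ↦ phiQuotient p (-(x.1 + x.2)) x.1) (a, b) := by
    have hca : (-(a + b), a) ≠ (0, 0) := by
      contrapose! hab
      simp only [Prod.mk.injEq] at hab ⊢
      exact ⟨hab.2, by linarith⟩
    exact (continuousAt_uncurry_phiQuotient hp_cont hp_smooth hca).comp_of_eq
      (f := fun x : ℝ × ℝ ↦ (-(x.1 + x.2), x.1)) (by fun_prop) rfl
  unfold phiTilde
  exact ContinuousAt.div (by fun_prop) (by fun_prop)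
    (pow_ne_zero 2 (sq_add_mul_add_sq_pos hab).ne')

theorem mul_mul_add_mul_phi_neg_of_mul_pos (hp_even : p.Even) (hp_mono : StrictMonoOn p (Ici 0))
    (hab : 0 < a * b) : a * b * (a + b) * phi p a b < 0 := by
  have h_lt_left : p a < p (a + b) :=
    lt_of_abs_lt_of_even hp_even hp_mono (sq_lt_sq.1 (by nlinarith [sq_nonneg b]))
  have h_lt_right : p b < p (a + b) :=
    lt_of_abs_lt_of_even hp_even hp_mono (sq_lt_sq.1 (by nlinarith [sq_nonneg a]))
  have h_left : 0 < a * (a + b) := by nlinarith [sq_nonneg a]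
  have h_right : 0 < b * (a + b) := by nlinarith [sq_nonneg b]
  calc a * b * (a + b) * phi p a b
      = -(a * b * (a * (a + b) * (p (a + b) - p a) + b * (a + b) * (p (a + b) - p b))) := by
        unfold phi
        ring
    _ < 0 := neg_neg_of_pos <| mul_pos hab <| add_pos
        (mul_pos h_left (sub_pos.2 h_lt_left)) (mul_pos h_right (sub_pos.2 h_lt_right))

theorem mul_mul_add_mul_phi_neg (hp_even : p.Even) (hp_mono : StrictMonoOn p (Ici 0))
    (ha : a ≠ 0) (hb : b ≠ 0) (hab : a + b ≠ 0) : a * b * (a + b) * phi p a b < 0 := by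
  by_cases h_ab : 0 < a * b
  · exact mul_mul_add_mul_phi_neg_of_mul_pos hp_even hp_mono h_ab
  by_cases h_ca : 0 < -(a + b) * a
  · have h := mul_mul_add_mul_phi_neg_of_mul_pos hp_even hp_mono h_ca
    rw [phi_neg_add hp_even] at h
    linarith
  have h_bc : 0 < -(a + b) * b := by
    have h_prod : 0 < a * b * (-(a + b) * a) * (-(a + b) * b) := by
      calc 0 < (a * b * (a + b)) ^ 2 := by positivity
        _ = a * b * (-(a + b) * a) * (-(a + b) * b) := by ring
    exact pos_of_mul_pos_right h_prod
      (mul_nonneg_of_nonpos_of_nonpos (not_lt.1 h_ab) (not_lt.1 h_ca))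
  have h := mul_mul_add_mul_phi_neg_of_mul_pos hp_even hp_mono h_bc
  rw [add_comm a b, phi_neg_add hp_even, phi_comm] at h
  linarith

theorem phiQuotient_zero_left_neg (hp_even : p.Even) (hp_mono : StrictMonoOn p (Ici 0))
    (hp_diff : DifferentiableOn ℝ p {0}ᶜ) (hb : b ≠ 0) : phiQuotient p 0 b < 0 := by
  have h_diff : DifferentiableAt ℝ p b :=
    hp_diff.differentiableAt (isOpen_compl_singleton.mem_nhds hb)
  have h_deriv : deriv (fun t ↦ t * p t) b = p b + b * deriv p b := by
    simpa using ((hasDerivAt_id' b).fun_mul h_diff.hasDerivAt).deriv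
  have h_lt : p 0 < p b := lt_of_abs_lt_of_even hp_even hp_mono (by simpa using hb)
  have h_nonneg := mul_deriv_nonneg_of_even hp_even hp_mono.monotoneOn b
  unfold phiQuotient
  rw [zero_add, dslope_same, h_deriv]
  linarith

theorem mul_add_mul_phiQuotient_neg (hp_even : p.Even) (hp_mono : StrictMonoOn p (Ici 0))
    (hp_diff : DifferentiableOn ℝ p {0}ᶜ) (hb : b ≠ 0) (hab : a + b ≠ 0) :
    b * (a + b) * phiQuotient p a b < 0 := by
  by_cases ha : a = 0
  · rw [ha, zero_add]
    exact mul_neg_of_pos_of_neg (mul_self_pos.2 hb)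
      (phiQuotient_zero_left_neg hp_even hp_mono hp_diff hb)
  · have h_phi := mul_mul_add_mul_phi_neg hp_even hp_mono ha hb hab
    rw [← mul_phiQuotient,
      show a * b * (a + b) * (a * phiQuotient p a b) =
        a ^ 2 * (b * (a + b) * phiQuotient p a b) by ring] at h_phi
    exact neg_of_mul_neg_right h_phi (sq_nonneg a)

theorem mul_add_mul_phiQuotient_nonpos (hp_even : p.Even) (hp_mono : StrictMonoOn p (Ici 0))
    (hp_diff : DifferentiableOn ℝ p {0}ᶜ) (a b : ℝ) :
    b * (a + b) * phiQuotient p a b ≤ 0 := by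
  by_cases h : b = 0 ∨ a + b = 0
  · rw [mul_eq_zero.2 h, zero_mul]
  · rw [not_or] at h
    exact (mul_add_mul_phiQuotient_neg hp_even hp_mono hp_diff h.1 h.2).le

theorem phiTilde_neg (hp_even : p.Even) (hp_mono : StrictMonoOn p (Ici 0))
    (hp_diff : DifferentiableOn ℝ p {0}ᶜ) (hab : (a, b) ≠ (0, 0)) : phiTilde p a b < 0 := by
  have h_a := mul_add_mul_phiQuotient_nonpos hp_even hp_mono hp_diff a b
  have h_b := mul_add_mul_phiQuotient_nonpos hp_even hp_mono hp_diff b a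
  have h_c := mul_add_mul_phiQuotient_nonpos hp_even hp_mono hp_diff (-(a + b)) a
  refine div_neg_of_neg_of_pos ?_ (pow_pos (sq_add_mul_add_sq_pos hab) 2)
  by_cases ha : a = 0
  · have hb : b ≠ 0 := fun hb ↦ hab (by rw [ha, hb])
    have h_a_neg := mul_add_mul_phiQuotient_neg hp_even hp_mono hp_diff (a := a) hb
      (by rwa [ha, zero_add])
    linarith
  by_cases h_add : b + a = 0
  · have h_c_neg := mul_add_mul_phiQuotient_neg hp_even hp_mono hp_diff (a := -(a + b)) ha
      (by contrapose! ha; linarith)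
    linarith
  · have h_b_neg := mul_add_mul_phiQuotient_neg hp_even hp_mono hp_diff ha h_add
    linarith

theorem phi_factorisation_general (hp_cont : Continuous p)
    (hp_smooth : ContDiffOn ℝ 1 p {0}ᶜ) (hp_even : ∀ x, p (-x) = p x)
    (hp_mono : StrictMonoOn p (Ici 0) ∨ StrictAntiOn p (Ici 0)) :
    ∃ φt : ℝ × ℝ → ℝ,
      ContinuousOn φt {x : ℝ × ℝ | x ≠ (0, 0)} ∧
      (∀ x : ℝ × ℝ, x ≠ (0, 0) → φt x ≠ 0) ∧
      ∀ a b : ℝ, (a, b) ≠ ((0 : ℝ), (0 : ℝ)) →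
        p a * a + p b * b - p (a + b) * (a + b) = a * b * (a + b) * φt (a, b) := by
  wlog hp_strictMono : StrictMonoOn p (Ici 0) generalizing p
  · have hp_neg : StrictMonoOn (-p) (Ici 0) := (hp_mono.resolve_left hp_strictMono).neg
    obtain ⟨φt, h_cont, h_ne, h_eq⟩ := this hp_cont.neg hp_smooth.neg
      (fun x ↦ congrArg Neg.neg (hp_even x)) (.inl hp_neg) hp_neg
    refine ⟨-φt, h_cont.neg, fun x hx ↦ neg_ne_zero.2 (h_ne x hx), fun a b hab ↦ ?_⟩
    have h := h_eq a b hab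
    simp only [Pi.neg_apply] at h ⊢
    linear_combination -h
  · exact ⟨fun x ↦ phiTilde p x.1 x.2,
      fun x hx ↦ (continuousAt_uncurry_phiTilde hp_cont hp_smooth hx).continuousWithinAt,
      fun x hx ↦
        (phiTilde_neg hp_even hp_strictMono (hp_smooth.differentiableOn one_ne_zero) hx).ne,
      fun a b hab ↦ phi_eq_mul_phiTilde hp_even hab⟩

/-- For `p` continuously differentiable, even and strictly monotone on `[0,∞)`,
one may factor `φ(a,b) = a b (a+b) φ̃(a,b)` with `φ̃` continuous and
non-vanishing away from the origin. -/
theorem phi_factorisation (p : ℝ → ℝ)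
    (hp_smooth : ContDiff ℝ 1 p)
    (hp_even : ∀ x, p (-x) = p x)
    (hp_mono : StrictMonoOn p (Set.Ici (0 : ℝ)) ∨ StrictAntiOn p (Set.Ici (0 : ℝ))) :
    ∃ φt : ℝ × ℝ → ℝ,
      ContinuousOn φt {x : ℝ × ℝ | x ≠ (0, 0)} ∧
      (∀ x : ℝ × ℝ, x ≠ (0, 0) → φt x ≠ 0) ∧
      ∀ a b : ℝ, (a, b) ≠ ((0 : ℝ), (0 : ℝ)) →
        p a * a + p b * b - p (a + b) * (a + b) = a * b * (a + b) * φt (a, b) := by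
  exact phi_factorisation_general hp_smooth.continuous hp_smooth.contDiffOn hp_even hp_mono
end

section
/- Under assumptions (A1) and (A3), there exist δ' > 0 and positive constants c and C (depending only on p and j*) such that for all (a,b) with 0 < r ≤ δ', where r = √(a²+b²), one has c |a b (a+b)| r^{2j*−2} ≤ |φ(a,b)| ≤ C |a b (a+b)| r^{2j*−2}. -/
/-!
Removing the linear part `p 0 * x`, which cancels in `φ`, leaves the odd function
`f x = (p x - p 0) * x`, equal to `x ^ (α + 1) * q x` for small `x ≥ 0`, where `α = 2 j*` and
`q = p̃`. With `c = -(a + b)` one has `φ = f a + f b + f c`, which is symmetric in the triple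
`(a, b, c)` and changes sign when the triple is negated, so one may assume `a = x`, `b = y` with
`0 ≤ y ≤ x`. There `f (x + y) - f x - f y` is `q 0` times
`(x + y) ^ (α + 1) - x ^ (α + 1) - y ^ (α + 1) ≍ y * (x + y) ^ α`, up to a Lipschitz error
`O((x + y) * (y * (x + y) ^ α))`, negligible at low frequency, and `y * (x + y) ^ α` is comparable
to `|a * b * c| * (|a| + |b| + |c|) ^ (α - 2)`.
-/

open Filter Set Topology
open scoped NNReal

section RealPower

variable {α x y : ℝ}

theorem rpow_add_one_sub_le (hα : 0 ≤ α) (hx : 0 ≤ x) (hy : 0 ≤ y) :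
    (x + y) ^ (α + 1) - x ^ (α + 1) ≤ (α + 1) * (y * (x + y) ^ α) := by
  obtain hs | hs := (add_nonneg hx hy).eq_or_lt
  · obtain ⟨rfl, rfl⟩ := (add_eq_zero_iff_of_nonneg hx hy).mp hs.symm
    simp
  have bernoulli : 1 + (α + 1) * (x / (x + y) - 1) ≤ (1 + (x / (x + y) - 1)) ^ (α + 1) :=
    one_add_mul_self_le_rpow_one_add (by linarith [div_nonneg hx hs.le]) (by linarith)
  rw [add_sub_cancel, Real.div_rpow hx hs.le, le_div_iff₀ (by positivity)] at bernoulli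
  have hpow : (x + y) ^ (α + 1) = (x + y) ^ α * (x + y) := Real.rpow_add_one hs.ne' α
  have hscale : (1 + (α + 1) * (x / (x + y) - 1)) * (x + y) ^ (α + 1) =
      (x + y) ^ (α + 1) - (α + 1) * (y * (x + y) ^ α) := by
    rw [hpow]
    field_simp
    ring
  linarith

theorem le_rpow_add_one_sub_sub (hα : 0 ≤ α) (hy : 0 ≤ y) (hyx : y ≤ x) :
    (1 - 2 ^ (-α)) * (y * (x + y) ^ α) ≤ (x + y) ^ (α + 1) - x ^ (α + 1) - y ^ (α + 1) := by
  have hx : 0 ≤ x := hy.trans hyx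
  have hα' : α + 1 ≠ 0 := by positivity
  have hxs : x ^ α ≤ (x + y) ^ α := by gcongr; linarith
  calc (1 - 2 ^ (-α)) * (y * (x + y) ^ α) = y * ((x + y) ^ α - ((x + y) / 2) ^ α) := by
        rw [Real.div_rpow (by positivity) zero_le_two, Real.rpow_neg zero_le_two]
        ring
    _ ≤ y * ((x + y) ^ α - y ^ α) := by gcongr; linarith
    _ ≤ x * ((x + y) ^ α - x ^ α) + y * ((x + y) ^ α - y ^ α) :=
        le_add_of_nonneg_left (mul_nonneg hx (sub_nonneg.mpr hxs))
    _ = (x + y) ^ (α + 1) - x ^ (α + 1) - y ^ (α + 1) := by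
        rw [Real.rpow_add_one' (by positivity) hα', Real.rpow_add_one' hx hα',
          Real.rpow_add_one' hy hα']
        ring

theorem rpow_le_rpow_abs_mul_rpow {r s κ : ℝ} (γ : ℝ) (hr : 0 < r) (hs : 0 < s)
    (hrs : r ≤ κ * s) (hsr : s ≤ κ * r) : r ^ γ ≤ κ ^ |γ| * s ^ γ := by
  have hκ : 0 < κ := pos_of_mul_pos_left (hr.trans_le hrs) hs.le
  obtain hγ | hγ := le_total 0 γ
  · rw [abs_of_nonneg hγ, ← Real.mul_rpow hκ.le hs.le]
    gcongr
  · calc r ^ γ ≤ (κ⁻¹ * s) ^ γ := by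
          refine Real.rpow_le_rpow_of_nonpos (by positivity) ?_ hγ
          rwa [inv_mul_le_iff₀ hκ]
      _ = κ ^ |γ| * s ^ γ := by
          rw [Real.mul_rpow (by positivity) hs.le, Real.inv_rpow hκ.le, abs_of_nonpos hγ,
            Real.rpow_neg hκ.le]

theorem Icc_mul_rpow_subset {A B : ℝ} (hA : 0 ≤ A) (hB : 0 ≤ B) (hy : 0 ≤ y) (hyx : y ≤ x)
    (hs : 0 < x + y) :
    Icc (A * (y * (x + y) ^ α)) (B * (y * (x + y) ^ α)) ⊆
      Icc (A / 2 ^ (α - 2) * (x * y * (x + y)) * (2 * (x + y)) ^ (α - 2))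
        (2 * B / 2 ^ (α - 2) * (x * y * (x + y)) * (2 * (x + y)) ^ (α - 2)) := by
  have hweight (D : ℝ) : D / 2 ^ (α - 2) * (x * y * (x + y)) * (2 * (x + y)) ^ (α - 2) =
      D * (x / (x + y)) * (y * (x + y) ^ α) := by
    rw [Real.mul_rpow zero_le_two hs.le, Real.rpow_sub hs, Real.rpow_two]
    field_simp
  have hle_one : x / (x + y) ≤ 1 := (div_le_one hs).mpr (by linarith)
  have hhalf_le : 1 / 2 ≤ x / (x + y) := (div_le_div_iff₀ two_pos hs).mpr (by linarith)
  rw [hweight, hweight]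
  refine Icc_subset_Icc ?_ ?_ <;> gcongr
  · exact mul_le_of_le_one_right hA hle_one
  · linarith [mul_le_mul_of_nonneg_left hhalf_le hB]

end RealPower

section LipschitzFactor

variable {α δ x y : ℝ} {K : ℝ≥0} {q : ℝ → ℝ}

theorem abs_rpow_mul_sub_sub_sub_le (hα : 0 ≤ α) (hq : LipschitzOnWith K q (Icc 0 δ))
    (hx : 0 ≤ x) (hy : 0 ≤ y) (hδ : x + y ≤ δ) :
    |((x + y) ^ (α + 1) * q (x + y) - x ^ (α + 1) * q x - y ^ (α + 1) * q y)
        - q 0 * ((x + y) ^ (α + 1) - x ^ (α + 1) - y ^ (α + 1))| ≤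
      (α + 3) * K * (x + y) * (y * (x + y) ^ α) := by
  have hs : 0 ≤ x + y := add_nonneg hx hy
  have lip {u v : ℝ} (hu : 0 ≤ u) (huv : u ≤ v) (hv : v ≤ δ) : |q v - q u| ≤ K * (v - u) := by
    simpa only [Real.dist_eq, abs_of_nonneg (sub_nonneg.mpr huv)] using
      hq.dist_le_mul v ⟨hu.trans huv, hv⟩ u ⟨hu, huv.trans hv⟩
  have hxs : x ^ (α + 1) ≤ (x + y) ^ (α + 1) := by gcongr; linarith
  have hys : y ^ (α + 1) ≤ (x + y) ^ (α + 1) := by gcongr; linarith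
  have increment : |((x + y) ^ (α + 1) - x ^ (α + 1)) * (q (x + y) - q 0)| ≤
      (α + 1) * (y * (x + y) ^ α) * (K * (x + y)) := by
    rw [abs_mul, abs_of_nonneg (sub_nonneg.mpr hxs)]
    gcongr
    · exact rpow_add_one_sub_le hα hx hy
    · simpa using lip le_rfl hs hδ
  have at_x : |x ^ (α + 1) * (q (x + y) - q x)| ≤ (x + y) ^ (α + 1) * (K * y) := by
    rw [abs_mul, abs_of_nonneg (by positivity)]
    gcongr
    simpa using lip hx (by linarith) hδ
  have at_y : |y ^ (α + 1) * (q y - q 0)| ≤ (x + y) ^ (α + 1) * (K * y) := by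
    rw [abs_mul, abs_of_nonneg (by positivity)]
    gcongr
    simpa using lip le_rfl hy (by linarith)
  calc _ = |((x + y) ^ (α + 1) - x ^ (α + 1)) * (q (x + y) - q 0)
          + x ^ (α + 1) * (q (x + y) - q x) - y ^ (α + 1) * (q y - q 0)| := by ring_nf
    _ ≤ (α + 1) * (y * (x + y) ^ α) * (K * (x + y)) + (x + y) ^ (α + 1) * (K * y)
          + (x + y) ^ (α + 1) * (K * y) :=
        (abs_sub _ _).trans (add_le_add ((abs_add_le _ _).trans (add_le_add increment at_x)) at_y)
    _ = (α + 3) * K * (x + y) * (y * (x + y) ^ α) := by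
        rw [Real.rpow_add_one' hs (by positivity)]
        ring

theorem abs_rpow_mul_sub_sub_mem_Icc (hα : 0 ≤ α) (hq : LipschitzOnWith K q (Icc 0 δ))
    (hsmall : (α + 3) * K * δ ≤ (1 - 2 ^ (-α)) / 2 * |q 0|)
    (hy : 0 ≤ y) (hyx : y ≤ x) (hs : x + y ≤ δ) :
    |(x + y) ^ (α + 1) * q (x + y) - x ^ (α + 1) * q x - y ^ (α + 1) * q y| ∈
      Icc ((1 - 2 ^ (-α)) / 2 * |q 0| * (y * (x + y) ^ α))
        ((α + 2) * |q 0| * (y * (x + y) ^ α)) := by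
  have hx : 0 ≤ x := hy.trans hyx
  set W := y * (x + y) ^ α
  set M := (x + y) ^ (α + 1) - x ^ (α + 1) - y ^ (α + 1)
  set D := (x + y) ^ (α + 1) * q (x + y) - x ^ (α + 1) * q x - y ^ (α + 1) * q y
  have hW₀ : 0 ≤ W := by positivity
  have hκ₀ : (0 : ℝ) < 2 ^ (-α) := by positivity
  have hκ₁ : (2 : ℝ) ^ (-α) ≤ 1 := Real.rpow_le_one_of_one_le_of_nonpos one_le_two (by linarith)
  have hM_lower : (1 - 2 ^ (-α)) * W ≤ M := le_rpow_add_one_sub_sub hα hy hyx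
  have hM_upper : M ≤ (α + 1) * W := by
    have : 0 ≤ y ^ (α + 1) := by positivity
    linarith [rpow_add_one_sub_le hα hx hy]
  have hM₀ : 0 ≤ M := (mul_nonneg (by linarith) hW₀).trans hM_lower
  have hqM : |q 0 * M| = |q 0| * M := by rw [abs_mul, abs_of_nonneg hM₀]
  have error : |D - q 0 * M| ≤ (1 - 2 ^ (-α)) / 2 * |q 0| * W :=
    calc |D - q 0 * M| ≤ (α + 3) * K * (x + y) * W := abs_rpow_mul_sub_sub_sub_le hα hq hx hy hs
      _ ≤ (α + 3) * K * δ * W := by gcongr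
      _ ≤ (1 - 2 ^ (-α)) / 2 * |q 0| * W := mul_le_mul_of_nonneg_right hsmall hW₀
  have hqM_lower := mul_le_mul_of_nonneg_left hM_lower (abs_nonneg (q 0))
  have hqM_upper := mul_le_mul_of_nonneg_left hM_upper (abs_nonneg (q 0))
  constructor
  · linarith [abs_sub_abs_le_abs_sub (q 0 * M) D, abs_sub_comm D (q 0 * M)]
  · have hqW : 0 ≤ |q 0| * W := by positivity
    linarith [abs_sub_abs_le_abs_sub D (q 0 * M), mul_nonneg hκ₀.le hqW]

end LipschitzFactor

section ZeroSum

variable {G : Type*} [AddCommGroup G] [LinearOrder G] [IsOrderedAddMonoid G]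

@[elab_as_elim]
theorem zero_sum_triple_induction {P : G → G → G → Prop}
    (swap : ∀ a b c, P a b c → P b a c) (rotate : ∀ a b c, P a b c → P b c a)
    (neg : ∀ a b c, P a b c → P (-a) (-b) (-c))
    (sector : ∀ x y, 0 ≤ y → y ≤ x → P x y (-(x + y)))
    {a b c : G} (h : a + b + c = 0) : P a b c := by
  have nonneg (x y : G) (hx : 0 ≤ x) (hy : 0 ≤ y) : P x y (-(x + y)) := by
    obtain hyx | hxy := le_total y x
    · exact sector x y hy hyx
    · exact swap _ _ _ (add_comm x y ▸ sector y x hx hxy)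
  have same_sign {u v w : G} (h : u + v + w = 0) (huv : 0 ≤ u ∧ 0 ≤ v ∨ u ≤ 0 ∧ v ≤ 0) :
      P u v w := by
    obtain rfl : w = -(u + v) := eq_neg_of_add_eq_zero_right h
    obtain ⟨hu, hv⟩ | ⟨hu, hv⟩ := huv
    · exact nonneg u v hu hv
    · simpa [add_comm] using neg _ _ _ (nonneg (-u) (-v) (neg_nonneg.mpr hu) (neg_nonneg.mpr hv))
  obtain hab | hbc | hca : (0 ≤ a ∧ 0 ≤ b ∨ a ≤ 0 ∧ b ≤ 0) ∨ (0 ≤ b ∧ 0 ≤ c ∨ b ≤ 0 ∧ c ≤ 0) ∨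
      (0 ≤ c ∧ 0 ≤ a ∨ c ≤ 0 ∧ a ≤ 0) := by
    have ha := le_total 0 a
    have hb := le_total 0 b
    have hc := le_total 0 c
    tauto
  · exact same_sign h hab
  · exact rotate _ _ _ (rotate _ _ _ (same_sign (by rw [← h]; abel) hbc))
  · exact rotate _ _ _ (same_sign (by rw [← h]; abel) hca)

theorem apply_neg_of_abs_le {H : Type*} [InvolutiveNeg H] {f : G → H} {δ x : G}
    (hf_odd : ∀ x ∈ Icc 0 δ, f (-x) = -f x) (hx : |x| ≤ δ) : f (-x) = -f x := by
  obtain h₀ | h₀ := le_total 0 x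
  · exact hf_odd x ⟨h₀, (le_abs_self x).trans hx⟩
  · rw [← neg_eq_iff_eq_neg, ← hf_odd (-x) ⟨neg_nonneg.mpr h₀, (neg_le_abs x).trans hx⟩, neg_neg]

theorem abs_add_add_mem_Icc_of_sector {f : ℝ → ℝ} {α δ A B : ℝ} (hA : 0 ≤ A) (hB : 0 ≤ B)
    (hf_odd : ∀ x ∈ Icc 0 δ, f (-x) = -f x)
    (hf : ∀ x y, 0 ≤ y → y ≤ x → x + y ≤ δ →
      |f (x + y) - f x - f y| ∈ Icc (A * (y * (x + y) ^ α)) (B * (y * (x + y) ^ α)))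
    {a b c : ℝ} (h : a + b + c = 0) (hpos : 0 < |a| + |b| + |c|) (hδ : |a| + |b| + |c| ≤ δ) :
    |f a + f b + f c| ∈
      Icc (A / 2 ^ (α - 2) * |a * b * c| * (|a| + |b| + |c|) ^ (α - 2))
        (2 * B / 2 ^ (α - 2) * |a * b * c| * (|a| + |b| + |c|) ^ (α - 2)) := by
  revert hpos hδ
  refine zero_sum_triple_induction ?_ ?_ ?_ ?_ h
  · intro a b c h
    simpa only [add_comm, add_left_comm, mul_comm, mul_left_comm] using h
  · intro a b c h
    simpa only [add_comm, add_left_comm, mul_comm, mul_left_comm] using h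
  · intro a b c h hpos hδ
    simp only [abs_neg] at hpos hδ
    have hneg : f (-a) + f (-b) + f (-c) = -(f a + f b + f c) := by
      rw [apply_neg_of_abs_le hf_odd (x := a) (by linarith [abs_nonneg b, abs_nonneg c]),
        apply_neg_of_abs_le hf_odd (x := b) (by linarith [abs_nonneg a, abs_nonneg c]),
        apply_neg_of_abs_le hf_odd (x := c) (by linarith [abs_nonneg a, abs_nonneg b])]
      ring
    have hprod : -a * -b * -c = -(a * b * c) := by ring
    simpa only [hneg, hprod, abs_neg] using h hpos hδ
  · intro x y hy hyx hpos hδ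
    have hx : 0 ≤ x := hy.trans hyx
    have hs : 0 ≤ x + y := add_nonneg hx hy
    have hsize : |x| + |y| + |-(x + y)| = 2 * (x + y) := by
      rw [abs_neg, abs_of_nonneg hx, abs_of_nonneg hy, abs_of_nonneg hs]
      ring
    have hprod : |x * y * -(x + y)| = x * y * (x + y) := by
      rw [mul_neg, abs_neg, abs_of_nonneg (by positivity)]
    rw [hsize] at hpos hδ
    have hsum : |f x + f y + f (-(x + y))| = |f (x + y) - f x - f y| := by
      rw [hf_odd _ ⟨hs, by linarith⟩, ← abs_neg]
      ring_nf
    rw [hsize, hprod, hsum]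
    exact Icc_mul_rpow_subset hA hB hy hyx (by linarith) (hf x y hy hyx (by linarith))

end ZeroSum

section LowFrequency

variable {α : ℝ} {p q : ℝ → ℝ} {K : ℝ≥0} {t : Set ℝ}

theorem exists_abs_mem_Icc_of_eventually_eq (hα : 0 < α)
    (hp_even : ∀ᶠ x in 𝓝[≥] 0, p (-x) = p x) (hp : ∀ᶠ x in 𝓝[≥] 0, p x = p 0 + x ^ α * q x)
    (ht : t ∈ 𝓝[≥] 0) (hq : LipschitzOnWith K q t) (hq0 : q 0 ≠ 0) :
    ∃ δ A B : ℝ, 0 < δ ∧ 0 < A ∧ 0 < B ∧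
      ∀ a b : ℝ, 0 < |a| + |b| + |a + b| → |a| + |b| + |a + b| ≤ δ →
        |p a * a + p b * b - p (a + b) * (a + b)| ∈
          Icc (A * |a * b * (a + b)| * (|a| + |b| + |a + b|) ^ (α - 2))
            (B * |a * b * (a + b)| * (|a| + |b| + |a + b|) ^ (α - 2)) := by
  have hκ : 0 < 1 - (2 : ℝ) ^ (-α) :=
    sub_pos.mpr (Real.rpow_lt_one_of_one_lt_of_neg one_lt_two (neg_neg_of_pos hα))
  have hsmall : ∀ᶠ x in 𝓝[≥] 0, (α + 3) * K * x ≤ (1 - 2 ^ (-α)) / 2 * |q 0| :=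
    ((Continuous.tendsto' (by fun_prop) 0 0 (by simp)).mono_left
      nhdsWithin_le_nhds).eventually_le_const (by positivity)
  obtain ⟨δ, hδ, hnear⟩ := mem_nhdsGE_iff_exists_Icc_subset.mp
    (hp_even.and (hp.and (hsmall.and ht)))
  set f : ℝ → ℝ := fun x ↦ (p x - p 0) * x with hf
  have hf_odd : ∀ x ∈ Icc 0 δ, f (-x) = -f x := fun x hx ↦ by
    simp only [hf, (hnear hx).1, mul_neg]
  have hf_eq : ∀ x ∈ Icc 0 δ, f x = x ^ (α + 1) * q x := fun x hx ↦ by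
    simp only [hf, (hnear hx).2.1, Real.rpow_add_one' hx.1 (by positivity : α + 1 ≠ 0)]
    ring
  have hf_sector (x y : ℝ) (hy : 0 ≤ y) (hyx : y ≤ x) (hs : x + y ≤ δ) :
      |f (x + y) - f x - f y| ∈ Icc ((1 - 2 ^ (-α)) / 2 * |q 0| * (y * (x + y) ^ α))
        ((α + 2) * |q 0| * (y * (x + y) ^ α)) := by
    rw [hf_eq _ ⟨by linarith, hs⟩, hf_eq x ⟨by linarith, by linarith⟩,
      hf_eq y ⟨hy, by linarith⟩]
    exact abs_rpow_mul_sub_sub_mem_Icc hα.le (hq.mono fun z hz ↦ (hnear hz).2.2.2)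
      (hnear ⟨hδ.le, le_rfl⟩).2.2.1 hy hyx hs
  refine ⟨δ, (1 - 2 ^ (-α)) / 2 * |q 0| / 2 ^ (α - 2), 2 * ((α + 2) * |q 0|) / 2 ^ (α - 2), hδ,
    by positivity, by positivity, fun a b hpos hle ↦ ?_⟩
  have hφ : p a * a + p b * b - p (a + b) * (a + b) = f a + f b + f (-(a + b)) := by
    rw [apply_neg_of_abs_le hf_odd (x := a + b) (by linarith [abs_nonneg a, abs_nonneg b])]
    ring
  have htriple := abs_add_add_mem_Icc_of_sector (by positivity) (by positivity) hf_odd hf_sector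
    (add_neg_cancel (a + b)) (by rwa [abs_neg]) (by rwa [abs_neg])
  rwa [mul_neg, abs_neg, abs_neg, ← hφ] at htriple

theorem sqrt_sq_add_sq_le_abs_add_abs (a b : ℝ) : √(a ^ 2 + b ^ 2) ≤ |a| + |b| := by
  refine Real.sqrt_le_iff.mpr ⟨by positivity, ?_⟩
  have : 0 ≤ |a| * |b| := by positivity
  rw [add_sq, sq_abs, sq_abs]
  linarith

theorem abs_add_abs_add_abs_le_four_mul_sqrt (a b : ℝ) :
    |a| + |b| + |a + b| ≤ 4 * √(a ^ 2 + b ^ 2) := by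
  have ha : |a| ≤ √(a ^ 2 + b ^ 2) := Real.abs_le_sqrt (by linarith [sq_nonneg b])
  have hb : |b| ≤ √(a ^ 2 + b ^ 2) := Real.abs_le_sqrt (by linarith [sq_nonneg a])
  linarith [abs_add_le a b]

theorem phi_low_frequency_bound_general (hα : 0 < α)
    (hp_even : ∀ᶠ x in 𝓝[≥] 0, p (-x) = p x) (hp : ∀ᶠ x in 𝓝[≥] 0, p x = p 0 + x ^ α * q x)
    (ht : t ∈ 𝓝[≥] 0) (hq : LipschitzOnWith K q t) (hq0 : q 0 ≠ 0) :
    ∃ δ c C : ℝ, 0 < δ ∧ 0 < c ∧ 0 < C ∧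
      ∀ a b : ℝ, 0 < √(a ^ 2 + b ^ 2) → √(a ^ 2 + b ^ 2) ≤ δ →
        c * |a * b * (a + b)| * √(a ^ 2 + b ^ 2) ^ (α - 2) ≤
          |p a * a + p b * b - p (a + b) * (a + b)| ∧
        |p a * a + p b * b - p (a + b) * (a + b)| ≤
          C * |a * b * (a + b)| * √(a ^ 2 + b ^ 2) ^ (α - 2) := by
  obtain ⟨δ, A, B, hδ, hA, hB, hbound⟩ :=
    exists_abs_mem_Icc_of_eventually_eq hα hp_even hp ht hq hq0
  refine ⟨δ / 4, A / 4 ^ |α - 2|, B * 4 ^ |α - 2|, by positivity, by positivity, by positivity,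
    fun a b hr hrδ ↦ ?_⟩
  have hrS : √(a ^ 2 + b ^ 2) ≤ |a| + |b| + |a + b| := by
    linarith [sqrt_sq_add_sq_le_abs_add_abs a b, abs_nonneg (a + b)]
  have hSr := abs_add_abs_add_abs_le_four_mul_sqrt a b
  have hS := hr.trans_le hrS
  obtain ⟨hlower, hupper⟩ := hbound a b hS (by linarith)
  constructor
  · calc A / 4 ^ |α - 2| * |a * b * (a + b)| * √(a ^ 2 + b ^ 2) ^ (α - 2)
        ≤ A / 4 ^ |α - 2| * |a * b * (a + b)| *
            (4 ^ |α - 2| * (|a| + |b| + |a + b|) ^ (α - 2)) := by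
          gcongr
          exact rpow_le_rpow_abs_mul_rpow _ hr hS (by linarith) hSr
      _ = A * |a * b * (a + b)| * (|a| + |b| + |a + b|) ^ (α - 2) := by field_simp
      _ ≤ |p a * a + p b * b - p (a + b) * (a + b)| := hlower
  · calc |p a * a + p b * b - p (a + b) * (a + b)|
        ≤ B * |a * b * (a + b)| * (|a| + |b| + |a + b|) ^ (α - 2) := hupper
      _ ≤ B * |a * b * (a + b)| * (4 ^ |α - 2| * √(a ^ 2 + b ^ 2) ^ (α - 2)) := by
          gcongr
          exact rpow_le_rpow_abs_mul_rpow _ hS hr hSr (by linarith)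
      _ = B * 4 ^ |α - 2| * |a * b * (a + b)| * √(a ^ 2 + b ^ 2) ^ (α - 2) := by ring

end LowFrequency

/-- Under assumptions (A1) and (A3), the low-frequency bound
`|φ(a,b)| ≍ |a b (a+b)| r^{2j*−2}` holds for `0 < r = √(a²+b²) ≤ δ'`. -/
theorem phi_low_frequency_bound
    (j : ℕ) (hj : 1 ≤ j)
    (p : ℝ → ℝ)
    -- (A1)
    (hp_smooth : ContDiff ℝ 2 p)
    (hp_even : ∀ x, p (-x) = p x)
    (hp_mono : StrictMonoOn p (Set.Ici (0 : ℝ)) ∨ StrictAntiOn p (Set.Ici (0 : ℝ)))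
    -- (A3)
    (δ₀ : ℝ) (hδ₀ : 0 < δ₀) (pt : ℝ → ℝ)
    (hpt_lip : LocallyLipschitz pt) (hpt0 : pt 0 ≠ 0)
    (hA3 : ∀ ξ : ℝ, |ξ| ≤ δ₀ → p ξ = p 0 + ξ ^ (2 * j) * pt ξ) :
    ∃ δ' c C : ℝ, 0 < δ' ∧ 0 < c ∧ 0 < C ∧
      ∀ a b : ℝ, 0 < Real.sqrt (a ^ 2 + b ^ 2) → Real.sqrt (a ^ 2 + b ^ 2) ≤ δ' →
        c * |a * b * (a + b)| * Real.sqrt (a ^ 2 + b ^ 2) ^ (2 * j - 2) ≤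
          |p a * a + p b * b - p (a + b) * (a + b)| ∧
        |p a * a + p b * b - p (a + b) * (a + b)| ≤
          C * |a * b * (a + b)| * Real.sqrt (a ^ 2 + b ^ 2) ^ (2 * j - 2) := by
  obtain ⟨K, t, ht, hK⟩ := hpt_lip 0
  have hA3_near : ∀ᶠ ξ in 𝓝[≥] (0 : ℝ), p ξ = p 0 + ξ ^ ((2 * j : ℕ) : ℝ) * pt ξ := by
    filter_upwards [Icc_mem_nhdsGE hδ₀] with ξ hξ
    rw [Real.rpow_natCast, hA3 ξ (abs_le.mpr ⟨by linarith [hξ.1], hξ.2⟩)]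
  have hexponent : ((2 * j : ℕ) : ℝ) - 2 = (2 * j - 2 : ℕ) := by
    rw [Nat.cast_sub (by lia), Nat.cast_ofNat]
  simpa only [hexponent, Real.rpow_natCast] using
    phi_low_frequency_bound_general (by positivity) (.of_forall hp_even) hA3_near
      (mem_nhdsWithin_of_mem_nhds ht) hK hpt0
end

section
/- Under assumptions (A1)–(A3), there exists a positive constant C (depending only on p, α, j*) such that for all ξ, η ∈ ℝ with ξ ≠ 0, η ≠ 0 and ξ − η ≠ 0, one has |m(ξ−η,η)| ≤ C [ 1/(|η| |ξ−η| |ξ|^{2j*−2}) + 1 + |ξ|(1 + 1/|η| + 1/|ξ−η|) ]. -/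
/-! For even `p`, the quantity `φ(a, b) = a p(a) + b p(b) - (a + b) p(a + b)` depends, up to sign,
only on `|a|`, `|b|`, `|a + b|`, one of which is the sum of the other two. For `u, v ≥ 0` and
monotone `p`, `-φ(u, v) = u (p(u + v) - p(u)) + v (p(u + v) - p(v))` is a sum of nonnegative terms,
so `|φ| ≥ x (p(z) - p(x))` with `x` the least and `z ≥ 2 x` the greatest of the three moduli.
The increment `p(z) - p(x)` dominates every dyadic increment `p(2 w) - p(w)` with `x ≤ w ≤ z / 2`,
and these are `≳ w ^ n` near `0` (if `p(w) - p(0) ∼ L w ^ n` with `L ≠ 0`), `≳ 1 / w` at infinity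
(by the mean value theorem), and bounded below in between. Taking `w` as large as possible near `0`
and as small as possible elsewhere gives `1 / (p(z) - p(x)) ≲ z ^ (-n) + 1 + x`. -/

open Set Filter Topology Asymptotics

section Resonance

/-- The resonance function `φ(a, b)` of the odd dispersion relation `ξ ↦ p ξ * ξ`. -/
def resonance (p : ℝ → ℝ) (a b : ℝ) : ℝ :=
  p a * a + p b * b - p (a + b) * (a + b)

/-- The multiplier `m(a, b)` to be estimated. Where `φ(a, b) = 0`, it takes the value `0`, by the
convention `x / 0 = 0`. -/
noncomputable def multiplier (p : ℝ → ℝ) (a b : ℝ) : ℝ :=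
  (a + b) / (2 * resonance p a b)

/-- The least modulus among the three interacting frequencies `a`, `b`, `a + b`. -/
def minFreq (a b : ℝ) : ℝ := min |a| (min |b| |a + b|)

/-- The greatest modulus among the three interacting frequencies `a`, `b`, `a + b`. -/
def maxFreq (a b : ℝ) : ℝ := max |a| (max |b| |a + b|)

theorem resonance_comm (p : ℝ → ℝ) (a b : ℝ) : resonance p b a = resonance p a b := by
  simp only [resonance, add_comm b a]
  ring

theorem resonance_neg_neg {p : ℝ → ℝ} (hp : p.Even) (a b : ℝ) :
    resonance p (-a) (-b) = -resonance p a b := by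
  simp only [resonance, ← neg_add, hp _]
  ring

theorem resonance_add_neg {p : ℝ → ℝ} (hp : p.Even) (a b : ℝ) :
    resonance p (a + b) (-b) = -resonance p a b := by
  simp only [resonance, add_neg_cancel_right, hp _]
  ring

theorem multiplier_neg (p : ℝ → ℝ) (a b : ℝ) : multiplier (-p) a b = -multiplier p a b := by
  simp only [multiplier, resonance, Pi.neg_apply, ← div_neg]
  ring

/-- The three maps generate the symmetries of the unordered triple `{a, b, -(a + b)}` up to a global
sign, and every orbit meets the quadrant `0 ≤ a, b`. -/
theorem triad_induction {P : ℝ → ℝ → Prop} (nonneg : ∀ u v, 0 ≤ u → 0 ≤ v → P u v)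
    (swap : ∀ a b, P b a → P a b) (neg : ∀ a b, P (-a) (-b) → P a b)
    (rotate : ∀ a b, P (a + b) (-b) → P a b) (a b : ℝ) : P a b := by
  wlog hsum : 0 ≤ a + b generalizing a b
  · exact neg a b (this (-a) (-b) (by linarith))
  wlog hba : b ≤ a generalizing a b
  · exact swap a b (this b a (by linarith) (by linarith))
  rcases le_total 0 b with hb | hb
  · exact nonneg a b (hb.trans hba) hb
  · exact rotate a b (nonneg _ _ hsum (neg_nonneg.2 hb))

theorem minFreq_comm (a b : ℝ) : minFreq b a = minFreq a b := by
  simp only [minFreq, add_comm b a, min_left_comm]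

theorem maxFreq_comm (a b : ℝ) : maxFreq b a = maxFreq a b := by
  simp only [maxFreq, add_comm b a, max_left_comm]

theorem minFreq_neg_neg (a b : ℝ) : minFreq (-a) (-b) = minFreq a b := by
  simp only [minFreq, ← neg_add, abs_neg]

theorem maxFreq_neg_neg (a b : ℝ) : maxFreq (-a) (-b) = maxFreq a b := by
  simp only [maxFreq, ← neg_add, abs_neg]

theorem minFreq_add_neg (a b : ℝ) : minFreq (a + b) (-b) = minFreq a b := by
  simp only [minFreq, add_neg_cancel_right, abs_neg, min_comm, min_left_comm]

theorem maxFreq_add_neg (a b : ℝ) : maxFreq (a + b) (-b) = maxFreq a b := by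
  simp only [maxFreq, add_neg_cancel_right, abs_neg, max_comm, max_left_comm]

theorem minFreq_of_nonneg {u v : ℝ} (hu : 0 ≤ u) (hv : 0 ≤ v) : minFreq u v = min u v := by
  rw [minFreq, abs_of_nonneg hu, abs_of_nonneg hv, abs_of_nonneg (add_nonneg hu hv),
    min_eq_left (le_add_of_nonneg_left hu)]

theorem maxFreq_of_nonneg {u v : ℝ} (hu : 0 ≤ u) (hv : 0 ≤ v) : maxFreq u v = u + v := by
  rw [maxFreq, abs_of_nonneg hu, abs_of_nonneg hv, abs_of_nonneg (add_nonneg hu hv),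
    max_eq_right (le_add_of_nonneg_left hu), max_eq_right (le_add_of_nonneg_right hv)]

theorem minFreq_pos {a b : ℝ} (ha : a ≠ 0) (hb : b ≠ 0) (hab : a + b ≠ 0) : 0 < minFreq a b :=
  lt_min (abs_pos.2 ha) (lt_min (abs_pos.2 hb) (abs_pos.2 hab))

theorem abs_add_le_maxFreq (a b : ℝ) : |a + b| ≤ maxFreq a b :=
  (le_max_right _ _).trans (le_max_right _ _)

theorem two_mul_minFreq_le_maxFreq (a b : ℝ) : 2 * minFreq a b ≤ maxFreq a b := by
  induction a, b using triad_induction with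
  | nonneg u v hu hv =>
    rw [minFreq_of_nonneg hu hv, maxFreq_of_nonneg hu hv, two_mul]
    exact add_le_add (min_le_left u v) (min_le_right u v)
  | swap a b h => rwa [minFreq_comm, maxFreq_comm] at h
  | neg a b h => rwa [minFreq_neg_neg, maxFreq_neg_neg] at h
  | rotate a b h => rwa [minFreq_add_neg, maxFreq_add_neg] at h

theorem inv_minFreq_le (a b : ℝ) : (minFreq a b)⁻¹ ≤ |a|⁻¹ + |b|⁻¹ + |a + b|⁻¹ := by
  have ha := inv_nonneg.2 (abs_nonneg a)
  have hb := inv_nonneg.2 (abs_nonneg b)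
  have hab := inv_nonneg.2 (abs_nonneg (a + b))
  rcases min_choice |a| (min |b| |a + b|) with h | h
  · rw [minFreq, h]
    linarith
  · rcases min_choice |b| |a + b| with h' | h' <;> rw [minFreq, h, h'] <;> linarith

theorem abs_mul_abs_mul_abs_add_le (a b : ℝ) :
    |a| * |b| * |a + b| ≤ minFreq a b * maxFreq a b ^ 2 := by
  have ha : |a| ≤ maxFreq a b := le_max_left _ _
  have hb : |b| ≤ maxFreq a b := (le_max_left _ _).trans (le_max_right _ _)
  have hab := abs_add_le_maxFreq a b
  have hmax := (abs_nonneg a).trans ha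
  rcases min_choice |a| (min |b| |a + b|) with h | h
  · rw [minFreq, h, mul_assoc, sq]
    gcongr
  · rcases min_choice |b| |a + b| with h' | h'
    · rw [minFreq, h, h', mul_comm |a|, mul_assoc, sq]
      gcongr
    · rw [minFreq, h, h', mul_comm, sq]
      gcongr

theorem neg_resonance_eq (p : ℝ → ℝ) (u v : ℝ) :
    -resonance p u v = u * (p (u + v) - p u) + v * (p (u + v) - p v) := by
  rw [resonance]
  ring

theorem minFreq_mul_sub_le_abs_resonance {p : ℝ → ℝ} (hp : p.Even) (hmono : MonotoneOn p (Ici 0))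
    (a b : ℝ) :
    minFreq a b * (p (maxFreq a b) - p (minFreq a b)) ≤ |resonance p a b| := by
  induction a, b using triad_induction with
  | nonneg u v hu hv =>
    have hu_term : 0 ≤ u * (p (u + v) - p u) :=
      mul_nonneg hu (sub_nonneg.2 (hmono hu (add_nonneg hu hv) (by linarith)))
    have hv_term : 0 ≤ v * (p (u + v) - p v) :=
      mul_nonneg hv (sub_nonneg.2 (hmono hv (add_nonneg hu hv) (by linarith)))
    rw [minFreq_of_nonneg hu hv, maxFreq_of_nonneg hu hv, ← abs_neg, neg_resonance_eq,
      abs_of_nonneg (add_nonneg hu_term hv_term)]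
    rcases min_choice u v with h | h <;> rw [h] <;> linarith
  | swap a b h => rwa [minFreq_comm, maxFreq_comm, resonance_comm] at h
  | neg a b h => rwa [minFreq_neg_neg, maxFreq_neg_neg, resonance_neg_neg hp, abs_neg] at h
  | rotate a b h => rwa [minFreq_add_neg, maxFreq_add_neg, resonance_add_neg hp, abs_neg] at h

end Resonance

section DyadicIncrement

variable {p : ℝ → ℝ}

/-- The increment of `p` over the dyadic interval `[w, 2 w]`, to which lower bounds for general
increments `p z - p x` with `2 x ≤ z` are reduced. -/
def dyadicIncrement (p : ℝ → ℝ) (w : ℝ) : ℝ := p (2 * w) - p w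

theorem dyadicIncrement_pos (hmono : StrictMonoOn p (Ici 0)) {w : ℝ} (hw : 0 < w) :
    0 < dyadicIncrement p w :=
  sub_pos.2 (hmono hw.le (mul_pos two_pos hw).le (by linarith))

theorem inv_sub_le_inv_dyadicIncrement (hmono : StrictMonoOn p (Ici 0)) {x w z : ℝ} (hx : 0 < x)
    (hxw : x ≤ w) (hwz : 2 * w ≤ z) : (p z - p x)⁻¹ ≤ (dyadicIncrement p w)⁻¹ := by
  have hw : 0 < w := hx.trans_le hxw
  have hright : p (2 * w) ≤ p z :=
    hmono.monotoneOn (mul_pos two_pos hw).le (mem_Ici.2 (by linarith)) hwz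
  have hleft : p x ≤ p w := hmono.monotoneOn hx.le hw.le hxw
  exact inv_anti₀ (dyadicIncrement_pos hmono hw) (sub_le_sub hright hleft)

theorem isBigO_pow_dyadicIncrement {n : ℕ} (hn : n ≠ 0) {L : ℝ} (hL : L ≠ 0)
    (h : Tendsto (fun x => (p x - p 0) / x ^ n) (𝓝[>] 0) (𝓝 L)) :
    (fun x => x ^ n) =O[𝓝[>] 0] dyadicIncrement p := by
  have htwo : Tendsto (fun x : ℝ => 2 * x) (𝓝[>] 0) (𝓝[>] 0) := by
    refine tendsto_nhdsWithin_iff.2 ⟨tendsto_nhdsWithin_of_tendsto_nhds ?_, ?_⟩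
    · exact (continuous_const_mul (2 : ℝ)).tendsto' 0 0 (mul_zero 2)
    · filter_upwards [self_mem_nhdsWithin] with x (hx : 0 < x) using mul_pos two_pos hx
  have hlim : Tendsto (fun x => dyadicIncrement p x / x ^ n) (𝓝[>] 0) (𝓝 (2 ^ n * L - L)) := by
    refine (((h.comp htwo).const_mul (2 ^ n)).sub h).congr' ?_
    filter_upwards [self_mem_nhdsWithin] with x (hx : 0 < x)
    simp only [Function.comp_apply, dyadicIncrement, mul_pow]
    field_simp
    ring
  have hlim_ne : 2 ^ n * L - L ≠ 0 := by
    rw [← sub_one_mul]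
    exact mul_ne_zero (sub_pos.2 (one_lt_pow₀ one_lt_two hn)).ne' hL
  exact isBigO_of_div_tendsto_nhds_of_ne_zero hlim hlim_ne

theorem exists_inv_dyadicIncrement_le_of_lt {n : ℕ} (hn : n ≠ 0) {L : ℝ} (hL : L ≠ 0)
    (h : Tendsto (fun x => (p x - p 0) / x ^ n) (𝓝[>] 0) (𝓝 L)) :
    ∃ δ > 0, ∃ C > 0, ∀ w, 0 < w → w < δ → (dyadicIncrement p w)⁻¹ ≤ C * (w ^ n)⁻¹ := by
  have hne : ∀ᶠ w : ℝ in 𝓝[>] 0, w ^ n = 0 → dyadicIncrement p w = 0 := by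
    filter_upwards [self_mem_nhdsWithin] with w (hw : 0 < w) h0
    exact absurd h0 (pow_pos hw n).ne'
  obtain ⟨C, hC, hbound⟩ := ((isBigO_pow_dyadicIncrement hn hL h).inv_rev hne).exists_pos
  obtain ⟨δ, hδ, hsub⟩ := mem_nhdsGT_iff_exists_Ioo_subset.1 hbound.bound
  refine ⟨δ, hδ, C, hC, fun w hw hwδ => ?_⟩
  calc (dyadicIncrement p w)⁻¹ ≤ ‖(dyadicIncrement p w)⁻¹‖ := Real.le_norm_self _
    _ ≤ C * ‖(w ^ n)⁻¹‖ := hsub ⟨hw, hwδ⟩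
    _ = C * (w ^ n)⁻¹ := by rw [Real.norm_of_nonneg (inv_pos.2 (pow_pos hw n)).le]

theorem exists_pos_le_dyadicIncrement_on_Icc (hmono : StrictMonoOn p (Ici 0)) {a : ℝ} (ha : 0 < a)
    (b : ℝ) : ∃ κ > 0, ∀ w ∈ Icc a b, κ ≤ dyadicIncrement p w := by
  refine isCompact_Icc.induction_on (p := fun s => ∃ κ > 0, ∀ w ∈ s, κ ≤ dyadicIncrement p w)
    ⟨1, one_pos, fun _ hw => hw.elim⟩ ?subset ?union ?nhds
  case subset => exact fun s t hst ⟨κ, hκ, h⟩ => ⟨κ, hκ, fun w hw => h w (hst hw)⟩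
  case union =>
    rintro s t ⟨κ, hκ, hs⟩ ⟨κ', hκ', ht⟩
    refine ⟨min κ κ', lt_min hκ hκ', fun w hw => ?_⟩
    exact hw.elim (fun h => min_le_of_left_le (hs w h)) fun h => min_le_of_right_le (ht w h)
  case nhds =>
    intro w₀ hw₀
    have hw₀_pos : 0 < w₀ := ha.trans_le hw₀.1
    -- For `w` close to `w₀`, the fixed interval `[5 w₀ / 4, 3 w₀ / 2]` lies in `[w, 2 w]`.
    have hgap : p (5 / 4 * w₀) < p (3 / 2 * w₀) :=
      hmono (mem_Ici.2 (by linarith)) (mem_Ici.2 (by linarith)) (by linarith)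
    have hnhds : Ioo (3 / 4 * w₀) (5 / 4 * w₀) ∈ 𝓝 w₀ := Ioo_mem_nhds (by linarith) (by linarith)
    refine ⟨_, mem_nhdsWithin_of_mem_nhds hnhds, _, sub_pos.2 hgap, fun w ⟨hlt, hgt⟩ => ?_⟩
    have hright : p (3 / 2 * w₀) ≤ p (2 * w) :=
      hmono.monotoneOn (mem_Ici.2 (by linarith)) (mem_Ici.2 (by linarith)) (by linarith)
    have hleft : p w ≤ p (5 / 4 * w₀) :=
      hmono.monotoneOn (mem_Ici.2 (by linarith)) (mem_Ici.2 (by linarith)) hgt.le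
    exact sub_le_sub hright hleft

theorem isBigO_inv_dyadicIncrement (h : (fun x => (x ^ 2)⁻¹) =O[atTop] deriv p) :
    (fun x => x⁻¹) =O[atTop] dyadicIncrement p := by
  obtain ⟨C, hC⟩ := h.bound
  obtain ⟨R, hR⟩ := (hC.and (eventually_gt_atTop 0)).exists_forall_of_atTop
  have hpos : ∀ t, R ≤ t → 0 < t := fun t ht => (hR t ht).2
  have hlower : ∀ t, R ≤ t → (t ^ 2)⁻¹ ≤ C * ‖deriv p t‖ := fun t ht =>
    (Real.le_norm_self _).trans (hR t ht).1
  have hdiff : ∀ t, R ≤ t → DifferentiableAt ℝ p t := fun t ht =>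
    differentiableAt_of_deriv_ne_zero fun h0 => by
      have hle := hlower t ht
      rw [h0, norm_zero, mul_zero] at hle
      exact hle.not_gt (inv_pos.2 (pow_pos (hpos t ht) 2))
  refine IsBigO.of_bound (4 * C) ?_
  filter_upwards [eventually_ge_atTop R] with x hx
  have hx_pos : 0 < x := hpos x hx
  obtain ⟨t, ht, hslope⟩ := exists_deriv_eq_slope p (show x < 2 * x by linarith)
    (fun t ht => (hdiff t (hx.trans ht.1)).continuousAt.continuousWithinAt)
    (fun t ht => (hdiff t (hx.trans ht.1.le)).differentiableWithinAt)
  have hmvt : dyadicIncrement p x = deriv p t * x := by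
    rw [hslope, dyadicIncrement]
    field_simp
    ring
  have ht_pos : 0 < t := hx_pos.trans ht.1
  calc ‖x⁻¹‖ = 4 * x * ((2 * x) ^ 2)⁻¹ := by
        rw [Real.norm_of_nonneg (inv_pos.2 hx_pos).le]
        field_simp
        norm_num
    _ ≤ 4 * x * (t ^ 2)⁻¹ := by gcongr; exact ht.2.le
    _ ≤ 4 * x * (C * ‖deriv p t‖) := by gcongr; exact hlower t (hx.trans ht.1.le)
    _ = 4 * C * ‖dyadicIncrement p x‖ := by
        rw [hmvt, norm_mul, Real.norm_of_nonneg hx_pos.le]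
        ring

theorem exists_inv_dyadicIncrement_le_of_ge (hmono : StrictMonoOn p (Ici 0))
    (h : (fun x => (x ^ 2)⁻¹) =O[atTop] deriv p) {a : ℝ} (ha : 0 < a) :
    ∃ C > 0, ∀ w, a ≤ w → (dyadicIncrement p w)⁻¹ ≤ C * (1 + w) := by
  have hne : ∀ᶠ w : ℝ in atTop, w⁻¹ = 0 → dyadicIncrement p w = 0 := by
    filter_upwards [eventually_gt_atTop 0] with w hw h0
    exact absurd h0 (inv_pos.2 hw).ne'
  obtain ⟨C, hC, hbound⟩ := ((isBigO_inv_dyadicIncrement h).inv_rev hne).exists_pos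
  obtain ⟨R, hR⟩ := eventually_atTop.1 hbound.bound
  obtain ⟨κ, hκ, hmid⟩ := exists_pos_le_dyadicIncrement_on_Icc hmono ha R
  refine ⟨κ⁻¹ + C, by positivity, fun w hw => ?_⟩
  have hw_pos : 0 < w := ha.trans_le hw
  have hκ_inv : 0 < κ⁻¹ := inv_pos.2 hκ
  rcases le_total w R with hwR | hwR
  · calc (dyadicIncrement p w)⁻¹ ≤ κ⁻¹ := inv_anti₀ hκ (hmid w ⟨hw, hwR⟩)
      _ ≤ (κ⁻¹ + C) * (1 + w) := by nlinarith
  · calc (dyadicIncrement p w)⁻¹ ≤ ‖(dyadicIncrement p w)⁻¹‖ := Real.le_norm_self _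
      _ ≤ C * ‖w⁻¹⁻¹‖ := hR w hwR
      _ = C * w := by rw [inv_inv, Real.norm_of_nonneg hw_pos.le]
      _ ≤ (κ⁻¹ + C) * (1 + w) := by nlinarith

theorem exists_inv_sub_le (hmono : StrictMonoOn p (Ici 0)) {n : ℕ} (hn : n ≠ 0) {L : ℝ}
    (hL : L ≠ 0) (hzero : Tendsto (fun x => (p x - p 0) / x ^ n) (𝓝[>] 0) (𝓝 L))
    (hinfty : (fun x => (x ^ 2)⁻¹) =O[atTop] deriv p) :
    ∃ C > 0, ∀ x z, 0 < x → 2 * x ≤ z → (p z - p x)⁻¹ ≤ C * ((z ^ n)⁻¹ + 1 + x) := by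
  obtain ⟨δ, hδ, A, hA, hsmall⟩ := exists_inv_dyadicIncrement_le_of_lt hn hL hzero
  obtain ⟨B, hB, hlarge⟩ := exists_inv_dyadicIncrement_le_of_ge hmono hinfty hδ
  refine ⟨A * 2 ^ n + B * (1 + δ), by positivity, fun x z hx hxz => ?_⟩
  have hz : 0 < z := by linarith
  have hz_inv : 0 < (z ^ n)⁻¹ := by positivity
  have hB' : 0 ≤ B * (1 + δ) := by positivity
  rcases lt_or_ge (z / 2) δ with hzδ | hzδ
  · calc (p z - p x)⁻¹ ≤ (dyadicIncrement p (z / 2))⁻¹ :=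
          inv_sub_le_inv_dyadicIncrement hmono hx (by linarith) (by linarith)
      _ ≤ A * ((z / 2) ^ n)⁻¹ := hsmall _ (half_pos hz) hzδ
      _ = A * 2 ^ n * (z ^ n)⁻¹ := by rw [div_pow, inv_div, div_eq_mul_inv, mul_assoc]
      _ ≤ (A * 2 ^ n + B * (1 + δ)) * ((z ^ n)⁻¹ + 1 + x) := by
          gcongr
          · exact le_add_of_nonneg_right hB'
          · linarith
  · have hmax : max x δ ≤ z / 2 := max_le (by linarith) hzδ
    calc (p z - p x)⁻¹ ≤ (dyadicIncrement p (max x δ))⁻¹ :=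
          inv_sub_le_inv_dyadicIncrement hmono hx (le_max_left x δ) (by linarith)
      _ ≤ B * (1 + max x δ) := hlarge _ (le_max_right x δ)
      _ ≤ B * ((1 + δ) * (1 + x)) := by
          gcongr
          rcases max_choice x δ with h | h <;> rw [h] <;> nlinarith [mul_pos hδ hx]
      _ = B * (1 + δ) * (1 + x) := by ring
      _ ≤ (A * 2 ^ n + B * (1 + δ)) * ((z ^ n)⁻¹ + 1 + x) := by
          gcongr
          · exact le_add_of_nonneg_left (by positivity)
          · linarith

end DyadicIncrement

section MultiplierBound

variable {p : ℝ → ℝ} {n : ℕ} {L : ℝ}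

theorem abs_add_div_minFreq_mul_le (hn : 2 ≤ n) {a b : ℝ} (ha : a ≠ 0) (hb : b ≠ 0)
    (hab : a + b ≠ 0) :
    |a + b| * (minFreq a b)⁻¹ * ((maxFreq a b ^ n)⁻¹ + 1 + minFreq a b) ≤
      1 / (|b| * |a| * |a + b| ^ (n - 2)) + 1 + |a + b| * (1 + 1 / |b| + 1 / |a|) := by
  have hx := minFreq_pos ha hb hab
  have hprod := abs_mul_abs_mul_abs_add_le a b
  have hsum := abs_add_le_maxFreq a b
  have hinv := inv_minFreq_le a b
  have hX := abs_pos.2 hab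
  generalize minFreq a b = x at *
  generalize maxFreq a b = z at *
  have hz : 0 < z := hX.trans_le hsum
  have hlow : |a + b| * x⁻¹ * (z ^ n)⁻¹ ≤ 1 / (|b| * |a| * |a + b| ^ (n - 2)) := by
    rw [mul_assoc, ← mul_inv, ← div_eq_mul_inv, div_le_div_iff₀ (by positivity) (by positivity)]
    calc |a + b| * (|b| * |a| * |a + b| ^ (n - 2))
        = |a| * |b| * |a + b| * |a + b| ^ (n - 2) := by ring
      _ ≤ x * z ^ 2 * z ^ (n - 2) := by gcongr
      _ = 1 * (x * z ^ n) := by rw [mul_assoc, ← pow_add, Nat.add_sub_cancel' hn, one_mul]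
  have hmid : |a + b| * x⁻¹ ≤ |a + b| * (|a|⁻¹ + |b|⁻¹) + 1 :=
    calc |a + b| * x⁻¹ ≤ |a + b| * (|a|⁻¹ + |b|⁻¹ + |a + b|⁻¹) := by gcongr
      _ = |a + b| * (|a|⁻¹ + |b|⁻¹) + 1 := by rw [mul_add, mul_inv_cancel₀ hX.ne']
  calc |a + b| * x⁻¹ * ((z ^ n)⁻¹ + 1 + x)
      = |a + b| * x⁻¹ * (z ^ n)⁻¹ + |a + b| * x⁻¹ + |a + b| := by field_simp
    _ ≤ _ := by
        simp only [one_div] at hlow ⊢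
        linarith

theorem exists_abs_multiplier_le_of_strictMonoOn (hp : p.Even) (hmono : StrictMonoOn p (Ici 0))
    (hn : 2 ≤ n) (hL : L ≠ 0) (hzero : Tendsto (fun x => (p x - p 0) / x ^ n) (𝓝[>] 0) (𝓝 L))
    (hinfty : (fun x => (x ^ 2)⁻¹) =O[atTop] deriv p) :
    ∃ C > 0, ∀ a b : ℝ, a ≠ 0 → b ≠ 0 → a + b ≠ 0 → |multiplier p a b| ≤
      C * (1 / (|b| * |a| * |a + b| ^ (n - 2)) + 1 + |a + b| * (1 + 1 / |b| + 1 / |a|)) := by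
  obtain ⟨C, hC, hinv⟩ := exists_inv_sub_le hmono (by omega) hL hzero hinfty
  refine ⟨C, hC, fun a b ha hb hab => ?_⟩
  have hbounds := abs_add_div_minFreq_mul_le hn ha hb hab
  have hres := minFreq_mul_sub_le_abs_resonance hp hmono.monotoneOn a b
  have hx := minFreq_pos ha hb hab
  have hxz := two_mul_minFreq_le_maxFreq a b
  have hinc : 0 < p (maxFreq a b) - p (minFreq a b) :=
    sub_pos.2 (hmono hx.le (mem_Ici.2 (by linarith)) (by linarith))
  calc |multiplier p a b| = |a + b| / (2 * |resonance p a b|) := by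
        rw [multiplier, abs_div, abs_mul, abs_two]
    _ ≤ |a + b| / (minFreq a b * (p (maxFreq a b) - p (minFreq a b))) := by
        refine div_le_div_of_nonneg_left (abs_nonneg _) (mul_pos hx hinc) (hres.trans ?_)
        exact le_mul_of_one_le_left (abs_nonneg _) one_le_two
    _ = |a + b| * (minFreq a b)⁻¹ * (p (maxFreq a b) - p (minFreq a b))⁻¹ := by
        rw [div_eq_mul_inv, mul_inv, mul_assoc]
    _ ≤ |a + b| * (minFreq a b)⁻¹ * (C * ((maxFreq a b ^ n)⁻¹ + 1 + minFreq a b)) := by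
        gcongr
        exact hinv _ _ hx hxz
    _ = C * (|a + b| * (minFreq a b)⁻¹ * ((maxFreq a b ^ n)⁻¹ + 1 + minFreq a b)) := by ring
    _ ≤ _ := by gcongr

theorem multiplier_m_upper_bound_general (hp : p.Even)
    (hmono : StrictMonoOn p (Ici 0) ∨ StrictAntiOn p (Ici 0)) (hn : 2 ≤ n) (hL : L ≠ 0)
    (hzero : Tendsto (fun x => (p x - p 0) / x ^ n) (𝓝[>] 0) (𝓝 L))
    (hinfty : (fun x => (x ^ 2)⁻¹) =O[atTop] deriv p) :
    ∃ C > 0, ∀ a b : ℝ, a ≠ 0 → b ≠ 0 → a + b ≠ 0 → |multiplier p a b| ≤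
      C * (1 / (|b| * |a| * |a + b| ^ (n - 2)) + 1 + |a + b| * (1 + 1 / |b| + 1 / |a|)) := by
  rcases hmono with hmono | hanti
  · exact exists_abs_multiplier_le_of_strictMonoOn hp hmono hn hL hzero hinfty
  · have hzero_neg : Tendsto (fun x => ((-p) x - (-p) 0) / x ^ n) (𝓝[>] 0) (𝓝 (-L)) :=
      hzero.neg.congr fun x => by simp only [Pi.neg_apply]; ring
    have hinfty_neg : (fun x => (x ^ 2)⁻¹) =O[atTop] deriv (-p) := by
      rw [deriv.neg']
      exact hinfty.neg_right
    simpa only [multiplier_neg, abs_neg] using exists_abs_multiplier_le_of_strictMonoOn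
      (p := -p) (hp.left_comp Neg.neg) hanti.neg hn (neg_ne_zero.2 hL) hzero_neg hinfty_neg

theorem tendsto_sub_div_pow_of_eq_add_pow_mul {q : ℝ → ℝ} (hq : ContinuousAt q 0) {δ : ℝ}
    (hδ : 0 < δ) (h : ∀ x, |x| ≤ δ → p x = p 0 + x ^ n * q x) :
    Tendsto (fun x => (p x - p 0) / x ^ n) (𝓝[>] 0) (𝓝 (q 0)) := by
  refine (tendsto_nhdsWithin_of_tendsto_nhds hq.tendsto).congr' ?_
  filter_upwards [Ioo_mem_nhdsGT hδ] with x hx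
  rw [h x (abs_le.2 ⟨by linarith [hx.1], hx.2.le⟩), add_sub_cancel_left,
    mul_div_cancel_left₀ _ (pow_pos hx.1 n).ne']

theorem isBigO_inv_sq_of_rpow_le {f : ℝ → ℝ} {β c R : ℝ} (hβ : -2 ≤ β) (hc : 0 < c)
    (h : ∀ x, R ≤ |x| → c * |x| ^ β ≤ |f x|) : (fun x => (x ^ 2)⁻¹) =O[atTop] f := by
  refine IsBigO.of_bound c⁻¹ ?_
  filter_upwards [eventually_ge_atTop R, eventually_ge_atTop 1] with x hxR hx1
  have hx : 0 < x := one_pos.trans_le hx1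
  have hpow : (x ^ 2)⁻¹ ≤ x ^ β := by
    rw [← Real.rpow_natCast, ← Real.rpow_neg hx.le]
    exact Real.rpow_le_rpow_of_exponent_le hx1 (by exact_mod_cast hβ)
  have hf := h x (by rwa [abs_of_pos hx])
  rw [abs_of_pos hx] at hf
  rw [Real.norm_of_nonneg (by positivity), Real.norm_eq_abs, le_inv_mul_iff₀ hc]
  exact (mul_le_mul_of_nonneg_left hpow hc.le).trans hf

end MultiplierBound

/-- Under assumptions (A1)–(A3), the multiplier `m` is bounded by `m₁ + m₂`:
`|m(ξ−η,η)| ≲ 1/(|η||ξ−η||ξ|^{2j*−2}) + 1 + |ξ|(1 + 1/|η| + 1/|ξ−η|)`. -/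
theorem multiplier_m_upper_bound
    (α : ℝ) (hα : α ∈ Set.Icc (-1 : ℝ) 1) (hα0 : α ≠ 0)
    (j : ℕ) (hj : 1 ≤ j)
    (p : ℝ → ℝ)
    -- (A1)
    (hp_smooth : ContDiff ℝ 2 p)
    (hp_even : ∀ x, p (-x) = p x)
    (hp_mono : StrictMonoOn p (Set.Ici (0 : ℝ)) ∨ StrictAntiOn p (Set.Ici (0 : ℝ)))
    -- (A2)
    (c₀ C₀ R₀ : ℝ) (hc₀ : 0 < c₀) (hc₀C₀ : c₀ ≤ C₀) (hR₀ : 1 ≤ R₀)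
    (hA2₀ : ∀ ξ : ℝ, R₀ ≤ |ξ| → c₀ * |ξ| ^ α ≤ |p ξ| ∧ |p ξ| ≤ C₀ * |ξ| ^ α)
    (hA2₁ : ∀ ξ : ℝ, R₀ ≤ |ξ| →
      c₀ * |ξ| ^ (α - 1) ≤ |deriv p ξ| ∧ |deriv p ξ| ≤ C₀ * |ξ| ^ (α - 1))
    (hA2₂ : ∀ ξ : ℝ, R₀ ≤ |ξ| →
      c₀ * |ξ| ^ (α - 2) ≤ |deriv (deriv p) ξ| ∧ |deriv (deriv p) ξ| ≤ C₀ * |ξ| ^ (α - 2))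
    -- (A3)
    (δ₀ : ℝ) (hδ₀ : 0 < δ₀) (pt : ℝ → ℝ)
    (hpt_lip : LocallyLipschitz pt) (hpt0 : pt 0 ≠ 0)
    (hA3 : ∀ ξ : ℝ, |ξ| ≤ δ₀ → p ξ = p 0 + ξ ^ (2 * j) * pt ξ) :
    ∃ C : ℝ, 0 < C ∧
      ∀ ξ η : ℝ, ξ ≠ 0 → η ≠ 0 → ξ - η ≠ 0 →
        |ξ / (2 * (p (ξ - η) * (ξ - η) + p η * η - p ξ * ξ))| ≤
          C * (1 / (|η| * |ξ - η| * |ξ| ^ (2 * j - 2)) +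
            1 + |ξ| * (1 + 1 / |η| + 1 / |ξ - η|)) := by
  obtain ⟨C, hC, hbound⟩ := multiplier_m_upper_bound_general hp_even hp_mono (by omega) hpt0
    (tendsto_sub_div_pow_of_eq_add_pow_mul hpt_lip.continuous.continuousAt hδ₀ hA3)
    (isBigO_inv_sq_of_rpow_le (by linarith [hα.1]) hc₀ fun ξ hξ => (hA2₁ ξ hξ).1)
  refine ⟨C, hC, fun ξ η hξ hη hξη => ?_⟩
  simpa only [multiplier, resonance, sub_add_cancel] using
    hbound (ξ - η) η hξη hη (by rwa [sub_add_cancel])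
end
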